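/- arXiv:2103.14603 — 3 statements merged into one kernel-verified Lean document; each statement's English description precedes it below -/
import Mathlib

section
/- Let X be a type and J : X → X → ℝ a quasi-pseudometric. Let δ > 0 and 0 < ε < δ/2, let V ⊆ X be a finite set such that no pair v, w ∈ V satisfies δ < J v w ≤ δ + ε, and let s₁, s₂ ∈ X with J s₁ s₂ ≤ ε. If v₁, v₂ ∈ V satisfy max (J v₁ s₁) (J s₁ v₁) ≤ δ/2 and max (J v₂ s₂) (J s₂ v₂) ≤ δ/2, then J v₁ v₂ ≤ δ; consequently v₁ and v₂ are connected by an edge in the graph that connects all vertex pairs of cost at most δ. -/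
/-- combining the gap lemma with the triangle-inequality chain,
nearby vertices of consecutive plan states are joined by a graph edge. -/
theorem consecutive_vertices_edge {X : Type*} (J : X → X → ℝ)
    (hrefl : ∀ x, J x x = 0)
    (hnonneg : ∀ x y, 0 ≤ J x y)
    (htri : ∀ x y z, J x z ≤ J x y + J y z)
    (δ ε : ℝ) (hδ : 0 < δ) (hε : 0 < ε) (hεδ : ε < δ / 2)
    (V : Finset X)
    (hgap : ∀ v ∈ V, ∀ w ∈ V, ¬ (δ < J v w ∧ J v w ≤ δ + ε))
    (s₁ s₂ : X) (h12 : J s₁ s₂ ≤ ε)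
    (v₁ v₂ : X) (hv₁ : v₁ ∈ V) (hv₂ : v₂ ∈ V)
    (h1 : max (J v₁ s₁) (J s₁ v₁) ≤ δ / 2)
    (h2 : max (J v₂ s₂) (J s₂ v₂) ≤ δ / 2) :
    J v₁ v₂ ≤ δ ∧
      (v₁, v₂) ∈ {p : X × X | p.1 ∈ V ∧ p.2 ∈ V ∧ J p.1 p.2 ≤ δ} := by
  have hle : J v₁ v₂ ≤ δ := by
    by_contra! hlt
    refine hgap v₁ hv₁ v₂ hv₂ ⟨hlt, ?_⟩
    linarith [htri v₁ s₁ v₂, htri s₁ s₂ v₂, (max_le_iff.mp h1).1, (max_le_iff.mp h2).2]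
  exact ⟨hle, hv₁, hv₂, hle⟩
end

section
/- (Theorem 1, completeness.) Let X be a type, J : X → X → ℝ a quasi-pseudometric, and free ⊆ X. Let δ > 0 and 0 < ε < δ/2. Let V ⊆ X be a finite set with dispersion at most δ/2 over free, i.e. for every x ∈ free there exists v ∈ V with max (J x v) (J v x) ≤ δ/2, and suppose no pair v, w ∈ V satisfies δ < J v w ≤ δ + ε. Let n ≥ 1 and let s : Fin (n+1) → X be a discretized motion plan with s 0 = x_start and s n = x_goal, such that J (s i) (s (i+1)) ≤ ε for every i < n, and with clearance δ: for every i, { y | J (s i) y ≤ δ } ⊆ free and { y | J y (s i) ≤ δ } ⊆ free. Then there exists a vertex sequence v : Fin (n+1) → X with v i ∈ V for all i, such that J x_start (v 0) ≤ δ, J (v n) x_goal ≤ δ, J (v i) (v (i+1)) ≤ δ for every i < n (so consecutive vertices are joined by graph edges), and v i ∈ free for every i. Hence graph search over the edge set { (v, w) ∈ V × V | J v w ≤ δ } with the stated accessibility and departability connections finds a path from x_start to x_goal. -/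
/-- Theorem 1, completeness: given a discretized clearance-δ
motion plan and a vertex set of dispersion at most δ/2 over free space with
the gap property, there is a vertex sequence in free space whose consecutive
vertices (and the start/goal connections) have cost at most δ, hence a path
through the motion-primitive graph. -/
theorem graph_search_complete {X : Type*} (J : X → X → ℝ)
    (hrefl : ∀ x, J x x = 0)
    (hnonneg : ∀ x y, 0 ≤ J x y)
    (htri : ∀ x y z, J x z ≤ J x y + J y z)
    (free : Set X)
    (δ ε : ℝ) (hδ : 0 < δ) (hε : 0 < ε) (hεδ : ε < δ / 2)
    (V : Finset X)
    (hdisp : ∀ x ∈ free, ∃ v ∈ V, max (J x v) (J v x) ≤ δ / 2)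
    (hgap : ∀ v ∈ V, ∀ w ∈ V, ¬ (δ < J v w ∧ J v w ≤ δ + ε))
    (n : ℕ) (hn : 1 ≤ n)
    (s : Fin (n + 1) → X) (x_start x_goal : X)
    (hstart : s 0 = x_start) (hgoal : s (Fin.last n) = x_goal)
    (hstep : ∀ i : Fin n, J (s i.castSucc) (s i.succ) ≤ ε)
    (hclear_fwd : ∀ i : Fin (n + 1), {y : X | J (s i) y ≤ δ} ⊆ free)
    (hclear_bwd : ∀ i : Fin (n + 1), {y : X | J y (s i) ≤ δ} ⊆ free) :
    ∃ v : Fin (n + 1) → X,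
      (∀ i, v i ∈ V) ∧
      J x_start (v 0) ≤ δ ∧
      J (v (Fin.last n)) x_goal ≤ δ ∧
      (∀ i : Fin n, J (v i.castSucc) (v i.succ) ≤ δ) ∧
      (∀ i, v i ∈ free) := by
  have hfree : ∀ i, s i ∈ free := fun i =>
    hclear_fwd i (show J (s i) (s i) ≤ δ by rw [hrefl]; exact hδ.le)
  choose v hvV hv using fun i => hdisp (s i) (hfree i)
  have hto : ∀ i, J (s i) (v i) ≤ δ / 2 := fun i => (le_max_left _ _).trans (hv i)
  have hfrom : ∀ i, J (v i) (s i) ≤ δ / 2 := fun i => (le_max_right _ _).trans (hv i)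
  refine ⟨v, hvV, ?_, ?_, fun i => ?_, fun i => hclear_fwd i ?_⟩
  · rw [← hstart]
    linarith [hto 0]
  · rw [← hgoal]
    linarith [hfrom (Fin.last n)]
  · have hle : J (v i.castSucc) (v i.succ) ≤ δ + ε := by
      linarith [htri (v i.castSucc) (s i.castSucc) (v i.succ),
        htri (s i.castSucc) (s i.succ) (v i.succ),
        hfrom i.castSucc, hstep i, hto i.succ]
    exact not_lt.mp fun hlt => hgap _ (hvV _) _ (hvV _) ⟨hlt, hle⟩
  · show J (s i) (v i) ≤ δ
    linarith [hto i]
end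

section
/- Let X be a type, J : X → X → ℝ a quasi-pseudometric, d ≥ 0, n ≥ 1, and s, v : Fin (n+1) → X with max (J (v i) (s i)) (J (s i) (v i)) ≤ d for every i. Then the total cost of the vertex path is bounded by the total cost of the discretized plan plus 2nd: ∑_{i < n} J (v i) (v (i+1)) ≤ (∑_{i < n} J (s i) (s (i+1))) + 2 * n * d. In particular, as the dispersion d tends to zero, the cost of the path found through the graph tends to the cost of the discretized optimal plan. -/
/-- the total cost of the vertex path exceeds the total cost of
the discretized plan by at most `2 * n * d`; as the dispersion `d → 0` the
graph path cost tends to the optimal plan cost. -/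
theorem vertex_path_cost_bound {X : Type*} (J : X → X → ℝ)
    (hrefl : ∀ x, J x x = 0)
    (hnonneg : ∀ x y, 0 ≤ J x y)
    (htri : ∀ x y z, J x z ≤ J x y + J y z)
    (d : ℝ) (hd : 0 ≤ d)
    (n : ℕ) (hn : 1 ≤ n)
    (s v : Fin (n + 1) → X)
    (hclose : ∀ i, max (J (v i) (s i)) (J (s i) (v i)) ≤ d) :
    ∑ i : Fin n, J (v i.castSucc) (v i.succ) ≤
      (∑ i : Fin n, J (s i.castSucc) (s i.succ)) + 2 * n * d := by
  have step (i : Fin n) :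
      J (v i.castSucc) (v i.succ) ≤ J (s i.castSucc) (s i.succ) + 2 * d := by
    have hstart := (le_max_left _ _).trans (hclose i.castSucc)
    have hend := (le_max_right _ _).trans (hclose i.succ)
    linarith [htri (v i.castSucc) (s i.castSucc) (v i.succ),
      htri (s i.castSucc) (s i.succ) (v i.succ)]
  calc ∑ i : Fin n, J (v i.castSucc) (v i.succ)
      ≤ ∑ i : Fin n, (J (s i.castSucc) (s i.succ) + 2 * d) :=
        Finset.sum_le_sum fun i _ => step i
    _ = (∑ i : Fin n, J (s i.castSucc) (s i.succ)) + 2 * n * d := by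
        rw [Finset.sum_add_distrib, Finset.sum_const, Finset.card_univ, Fintype.card_fin,
          nsmul_eq_mul]
        ring
end
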